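/- Let M ×_{ρ,σ} C be a crossed product algebra associated to entwining data (P, C, ψ, e, ψ^C), and let γ : C → M be convolution invertible with γ(e) = 1 and ψ^C₂₃∘ψ₁₂∘(id_C ⊗ γ ⊗ id_C)∘(id_C ⊗ Δ) = (γ ⊗ id_C ⊗ id_C)∘(Δ ⊗ id_C)∘ψ^C. Define ρ^γ(c ⊗ u) = γ(c₍₁₎) ρ(c₍₂₎ ⊗ u_α) γ⁻¹(c₍₃₎^α) and σ^γ(b ⊗ c) = γ(b₍₁₎) ρ(b₍₂₎ ⊗ γ(c_A₍₁₎)_α) σ(b₍₃₎^α ⊗ c_A₍₂₎) γ⁻¹(b₍₄₎^A). Then (ρ^γ, σ^γ) are crossed product data (satisfy (i)–(iv) and associativity conditions), and the map Θ : M ⊗ C → M ×_{ρ,σ} C, Θ(x ⊗ c) = x γ(c₍₁₎) ⊗ c₍₂₎, is an algebra isomorphism from M ×_{ρ^γ,σ^γ} C onto M ×_{ρ,σ} C. -/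

import Mathlib

open TensorProduct LinearMap

noncomputable section

namespace Entwine

variable (k : Type) [Field k] (P : Type) [Ring P] [Algebra k P]
  (C : Type) [AddCommGroup C] [Module k C] [Coalgebra k C]

/-- coproduct of `C` -/
abbrev Δ : C →ₗ[k] C ⊗[k] C := Coalgebra.comul
/-- counit of `C` -/
abbrev ε : C →ₗ[k] k := Coalgebra.counit
/-- multiplication of `P` -/
abbrev μ : P ⊗[k] P →ₗ[k] P := LinearMap.mul' k P

variable (ψ : C ⊗[k] P →ₗ[k] P ⊗[k] C)

/-- entwining axiom `ψ∘(id⊗μ) = (μ⊗id)∘ψ₂₃∘ψ₁₂` -/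
def AxMul : Prop :=
  ψ ∘ₗ map LinearMap.id (μ k P) =
    map (μ k P) LinearMap.id
      ∘ₗ (TensorProduct.assoc k P P C).symm.toLinearMap
      ∘ₗ map LinearMap.id ψ
      ∘ₗ (TensorProduct.assoc k P C P).toLinearMap
      ∘ₗ map ψ LinearMap.id
      ∘ₗ (TensorProduct.assoc k C P P).symm.toLinearMap

/-- entwining axiom `ψ(c ⊗ 1) = 1 ⊗ c` -/
def AxOne : Prop := ∀ c : C, ψ (c ⊗ₜ (1 : P)) = (1 : P) ⊗ₜ c

/-- entwining axiom `(id⊗Δ)∘ψ = ψ₁₂∘ψ₂₃∘(Δ⊗id)` -/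
def AxComul : Prop :=
  map LinearMap.id (Δ k C) ∘ₗ ψ =
    (TensorProduct.assoc k P C C).toLinearMap
      ∘ₗ map ψ LinearMap.id
      ∘ₗ (TensorProduct.assoc k C P C).symm.toLinearMap
      ∘ₗ map LinearMap.id ψ
      ∘ₗ (TensorProduct.assoc k C C P).toLinearMap
      ∘ₗ map (Δ k C) LinearMap.id

/-- entwining axiom `(id⊗ε)∘ψ = ε⊗id` -/
def AxCounit : Prop :=
  (TensorProduct.rid k P).toLinearMap ∘ₗ map LinearMap.id (ε k C) ∘ₗ ψ =
    (TensorProduct.lid k P).toLinearMap ∘ₗ map (ε k C) LinearMap.id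

/-- `ψ` is an entwining map for the algebra `P` and the coalgebra `C` -/
def IsEntwining : Prop :=
  AxMul k P C ψ ∧ AxOne k P C ψ ∧ AxComul k P C ψ ∧ AxCounit k P C ψ

variable (e : C)

/-- `e` is a group-like element -/
def IsGrouplike : Prop :=
  Δ k C e = e ⊗ₜ[k] e ∧ ε k C e = 1

variable (ψC : C ⊗[k] C →ₗ[k] C ⊗[k] C)

/-- `(id⊗Δ)∘ψ^C = ψ^C₁₂∘ψ^C₂₃∘(Δ⊗id)` -/
def AxPsiCComul : Prop :=
  map LinearMap.id (Δ k C) ∘ₗ ψC =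
    (TensorProduct.assoc k C C C).toLinearMap
      ∘ₗ map ψC LinearMap.id
      ∘ₗ (TensorProduct.assoc k C C C).symm.toLinearMap
      ∘ₗ map LinearMap.id ψC
      ∘ₗ (TensorProduct.assoc k C C C).toLinearMap
      ∘ₗ map (Δ k C) LinearMap.id

/-- `(id⊗ε)∘ψ^C = ε⊗id` -/
def AxPsiCCounit : Prop :=
  (TensorProduct.rid k C).toLinearMap ∘ₗ map LinearMap.id (ε k C) ∘ₗ ψC =
    (TensorProduct.lid k C).toLinearMap ∘ₗ map (ε k C) LinearMap.id

/-- `ψ^C(e ⊗ c) = Δc` -/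
def AxPsiCUnit : Prop := ∀ c : C, ψC (e ⊗ₜ[k] c) = Δ k C c

/-- `(P, C, ψ, e, ψ^C)` form entwining data -/
def IsEntwiningData : Prop :=
  IsEntwining k P C ψ ∧ IsGrouplike k C e ∧
    AxPsiCComul k C ψC ∧ AxPsiCCounit k C ψC ∧ AxPsiCUnit k C e ψC

/-- the right coaction `Δ_R u = ψ(e ⊗ u)` on `P` -/
def deltaR : P →ₗ[k] P ⊗[k] C := ψ ∘ₗ TensorProduct.mk k C P e

/-- the fixed point subspace `M = P^{coC}_e`, as a submodule of `P` -/
def Msub : Submodule k P where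
  carrier := {x : P | ψ (e ⊗ₜ x) = x ⊗ₜ e}
  add_mem' := by
    intro a b ha hb
    simp only [Set.mem_setOf_eq] at *
    rw [TensorProduct.tmul_add, map_add, ha, hb, TensorProduct.add_tmul]
  zero_mem' := by
    simp only [Set.mem_setOf_eq, TensorProduct.tmul_zero, map_zero,
      TensorProduct.zero_tmul]
  smul_mem' := by
    intro r x hx
    simp only [Set.mem_setOf_eq] at *
    rw [TensorProduct.tmul_smul, map_smul, hx, TensorProduct.smul_tmul']

/-- the subspace `M ⊗ C` of `P ⊗ C` -/
def MCsub : Submodule k (P ⊗[k] C) :=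
  LinearMap.range (map (Msub k P C ψ e).subtype (LinearMap.id : C →ₗ[k] C))

variable (ρ : C ⊗[k] P →ₗ[k] P) (σ : C ⊗[k] C →ₗ[k] P)

/-- the map `ρ̂ : c ⊗ x ↦ ρ(c₍₁₎ ⊗ x_α) ⊗ c₍₂₎^α` -/
def rhat : C ⊗[k] P →ₗ[k] P ⊗[k] C :=
  map ρ LinearMap.id
    ∘ₗ (TensorProduct.assoc k C P C).symm.toLinearMap
    ∘ₗ map LinearMap.id ψ
    ∘ₗ (TensorProduct.assoc k C C P).toLinearMap
    ∘ₗ map (Δ k C) LinearMap.id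

/-- the map `σ̂ : b ⊗ c ↦ σ(b₍₁₎ ⊗ c_A) ⊗ b₍₂₎^A` -/
def shat : C ⊗[k] C →ₗ[k] P ⊗[k] C :=
  map σ LinearMap.id
    ∘ₗ (TensorProduct.assoc k C C C).symm.toLinearMap
    ∘ₗ map LinearMap.id ψC
    ∘ₗ (TensorProduct.assoc k C C C).toLinearMap
    ∘ₗ map (Δ k C) LinearMap.id

/-- multiplication of the first two factors: `x ⊗ (y ⊗ c) ↦ xy ⊗ c` -/
def mulPC : P ⊗[k] (P ⊗[k] C) →ₗ[k] P ⊗[k] C :=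
  map (μ k P) LinearMap.id ∘ₗ (TensorProduct.assoc k P P C).symm.toLinearMap

/-- the crossed product `(x ⊗ b)(y ⊗ c) = xρ(b₍₁₎⊗y_α)σ(b₍₂₎^α₍₁₎⊗c_A) ⊗ b₍₂₎^α₍₂₎^A` -/
def prodX : (P ⊗[k] C) ⊗[k] (P ⊗[k] C) →ₗ[k] P ⊗[k] C :=
  mulPC k P C
    ∘ₗ map LinearMap.id (mulPC k P C)
    ∘ₗ map LinearMap.id
        (map LinearMap.id (shat k P C ψC σ)
          ∘ₗ (TensorProduct.assoc k P C C).toLinearMap)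
    ∘ₗ map LinearMap.id
        (map (rhat k P C ψ ρ) LinearMap.id
          ∘ₗ (TensorProduct.assoc k C P C).symm.toLinearMap)
    ∘ₗ (TensorProduct.assoc k P C (P ⊗[k] C)).toLinearMap

/-- condition (i): `ρ(e,x) = x` for `x ∈ M` and `ρ(c,1) = ε(c)1` -/
def CondI : Prop :=
  (∀ x : P, x ∈ Msub k P C ψ e → ρ (e ⊗ₜ x) = x) ∧
    ∀ c : C, ρ (c ⊗ₜ (1 : P)) = ε k C c • (1 : P)

/-- condition (ii): `ρ̂` maps `C ⊗ M` into `M ⊗ C` -/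
def CondII : Prop :=
  ∀ (c : C) (x : P), x ∈ Msub k P C ψ e →
    rhat k P C ψ ρ (c ⊗ₜ x) ∈ MCsub k P C ψ e

/-- the right hand side of condition (iii): `(μ⊗id)∘(id⊗ρ̂)∘(ρ̂⊗id)` -/
def BmapIII : C ⊗[k] (P ⊗[k] P) →ₗ[k] P ⊗[k] C :=
  mulPC k P C
    ∘ₗ map LinearMap.id (rhat k P C ψ ρ)
    ∘ₗ (TensorProduct.assoc k P C P).toLinearMap
    ∘ₗ map (rhat k P C ψ ρ) LinearMap.id
    ∘ₗ (TensorProduct.assoc k C P P).symm.toLinearMap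

/-- condition (iii): twisted multiplicativity of `ρ` -/
def CondIII : Prop :=
  ∀ (c : C) (x y : P), x ∈ Msub k P C ψ e → y ∈ Msub k P C ψ e →
    rhat k P C ψ ρ (c ⊗ₜ (x * y)) = BmapIII k P C ψ ρ (c ⊗ₜ (x ⊗ₜ y))

/-- `σ` takes values in `M` -/
def SigmaIntoM : Prop := ∀ b c : C, σ (b ⊗ₜ c) ∈ Msub k P C ψ e

/-- condition (iv): `σ(e⊗c) = ε(c)1` and `σ(c₍₁₎⊗e_A) ⊗ c₍₂₎^A = 1 ⊗ c` -/
def CondIV : Prop :=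
  (∀ c : C, σ (e ⊗ₜ c) = ε k C c • (1 : P)) ∧
    ∀ c : C, shat k P C ψC σ (c ⊗ₜ e) = (1 : P) ⊗ₜ c

/-- `(ρ, σ)` are crossed product data: conditions (i)–(iv). -/
def IsCrossedData : Prop :=
  CondI k P C ψ e ρ ∧ CondII k P C ψ e ρ ∧ CondIII k P C ψ e ρ ∧
    SigmaIntoM k P C ψ e σ ∧ CondIV k P C e ψC σ

/-- left hand side of the cocycle condition (2.6) -/
def CocLHS : C ⊗[k] (C ⊗[k] C) →ₗ[k] P ⊗[k] C :=
  mulPC k P C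
    ∘ₗ map LinearMap.id (shat k P C ψC σ)
    ∘ₗ (TensorProduct.assoc k P C C).toLinearMap
    ∘ₗ map (rhat k P C ψ ρ) LinearMap.id
    ∘ₗ (TensorProduct.assoc k C P C).symm.toLinearMap
    ∘ₗ map LinearMap.id (shat k P C ψC σ)

/-- right hand side of the cocycle condition (2.6) -/
def CocRHS : C ⊗[k] (C ⊗[k] C) →ₗ[k] P ⊗[k] C :=
  mulPC k P C
    ∘ₗ map LinearMap.id (shat k P C ψC σ)
    ∘ₗ (TensorProduct.assoc k P C C).toLinearMap
    ∘ₗ map (shat k P C ψC σ) LinearMap.id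
    ∘ₗ (TensorProduct.assoc k C C C).symm.toLinearMap

/-- the cocycle condition (2.6) -/
def Cocycle : Prop := CocLHS k P C ψ ψC ρ σ = CocRHS k P C ψC σ

/-- left hand side of the twisted module condition (2.7) -/
def TwLHS : C ⊗[k] (C ⊗[k] P) →ₗ[k] P ⊗[k] C :=
  mulPC k P C
    ∘ₗ map LinearMap.id (shat k P C ψC σ)
    ∘ₗ (TensorProduct.assoc k P C C).toLinearMap
    ∘ₗ map (rhat k P C ψ ρ) LinearMap.id
    ∘ₗ (TensorProduct.assoc k C P C).symm.toLinearMap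
    ∘ₗ map LinearMap.id (rhat k P C ψ ρ)

/-- right hand side of the twisted module condition (2.7) -/
def TwRHS : C ⊗[k] (C ⊗[k] P) →ₗ[k] P ⊗[k] C :=
  mulPC k P C
    ∘ₗ map LinearMap.id (rhat k P C ψ ρ)
    ∘ₗ (TensorProduct.assoc k P C P).toLinearMap
    ∘ₗ map (shat k P C ψC σ) LinearMap.id
    ∘ₗ (TensorProduct.assoc k C C P).symm.toLinearMap

/-- the twisted module condition (2.7), for `x ∈ M` -/
def Twisted : Prop :=
  ∀ (a b : C) (x : P), x ∈ Msub k P C ψ e →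
    TwLHS k P C ψ ψC ρ σ (a ⊗ₜ (b ⊗ₜ x)) = TwRHS k P C ψ ψC ρ σ (a ⊗ₜ (b ⊗ₜ x))

end Entwine

namespace Entwine

section Gauge
variable (k : Type) [Field k] (P : Type) [Ring P] [Algebra k P]
    (C : Type) [AddCommGroup C] [Module k C] [Coalgebra k C]
    (ψ : C ⊗[k] P →ₗ[k] P ⊗[k] C) (e : C) (ψC : C ⊗[k] C →ₗ[k] C ⊗[k] C)
    (ρ : C ⊗[k] P →ₗ[k] P) (σ : C ⊗[k] C →ₗ[k] P)
    (γ γi : C →ₗ[k] P)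

/-- the covariance condition (2.16) for a gauge transformation `γ`:
`ψ^C₂₃∘ψ₁₂∘(id⊗γ⊗id)∘(id⊗Δ) = (γ⊗id⊗id)∘(Δ⊗id)∘ψ^C` -/
def Cov216 : Prop :=
  map LinearMap.id ψC
      ∘ₗ (TensorProduct.assoc k P C C).toLinearMap
      ∘ₗ map ψ LinearMap.id
      ∘ₗ (TensorProduct.assoc k C P C).symm.toLinearMap
      ∘ₗ map LinearMap.id (map γ LinearMap.id)
      ∘ₗ map LinearMap.id (Δ k C) =
    map γ LinearMap.id
      ∘ₗ (TensorProduct.assoc k C C C).toLinearMap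
      ∘ₗ map (Δ k C) LinearMap.id
      ∘ₗ ψC

/-- `ρ^γ(c ⊗ u) = γ(c₍₁₎) ρ(c₍₂₎ ⊗ u_α) γ⁻¹(c₍₃₎^α)` -/
def rhoGamma : C ⊗[k] P →ₗ[k] P :=
  μ k P
    ∘ₗ map γ (μ k P)
    ∘ₗ map LinearMap.id (map ρ γi)
    ∘ₗ map LinearMap.id (TensorProduct.assoc k C P C).symm.toLinearMap
    ∘ₗ map LinearMap.id (map LinearMap.id ψ)
    ∘ₗ map LinearMap.id (TensorProduct.assoc k C C P).toLinearMap
    ∘ₗ (TensorProduct.assoc k C (C ⊗[k] C) P).toLinearMap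
    ∘ₗ map (map LinearMap.id (Δ k C) ∘ₗ Δ k C) LinearMap.id

/-- `σ^γ(b ⊗ c) = γ(b₍₁₎) ρ(b₍₂₎ ⊗ γ(c_A₍₁₎)_α) σ(b₍₃₎^α ⊗ c_A₍₂₎) γ⁻¹(b₍₄₎^A)` -/
def sigmaGamma : C ⊗[k] C →ₗ[k] P :=
  μ k P
    ∘ₗ map γ LinearMap.id
    ∘ₗ map LinearMap.id (μ k P)
    ∘ₗ map LinearMap.id (map ρ (μ k P))
    ∘ₗ map LinearMap.id (TensorProduct.assoc k C P (P ⊗[k] P)).symm.toLinearMap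
    ∘ₗ map LinearMap.id (map LinearMap.id (map LinearMap.id (map σ γi)))
    ∘ₗ map LinearMap.id (map LinearMap.id
        (map LinearMap.id (TensorProduct.assoc k C C C).symm.toLinearMap))
    ∘ₗ map LinearMap.id (map LinearMap.id
        (TensorProduct.assoc k P C (C ⊗[k] C)).toLinearMap)
    ∘ₗ map LinearMap.id (map LinearMap.id (map ψ LinearMap.id))
    ∘ₗ map LinearMap.id (map LinearMap.id
        (TensorProduct.assoc k C P (C ⊗[k] C)).symm.toLinearMap)
    ∘ₗ map LinearMap.id (map LinearMap.id
        (map LinearMap.id (map γ LinearMap.id)))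
    ∘ₗ map LinearMap.id (map LinearMap.id
        (map LinearMap.id (TensorProduct.assoc k C C C).toLinearMap))
    ∘ₗ map LinearMap.id (map LinearMap.id
        (map LinearMap.id (map (Δ k C) LinearMap.id)))
    ∘ₗ map LinearMap.id (map LinearMap.id (map LinearMap.id ψC))
    ∘ₗ map LinearMap.id (map LinearMap.id (TensorProduct.assoc k C C C).toLinearMap)
    ∘ₗ map LinearMap.id (TensorProduct.assoc k C (C ⊗[k] C) C).toLinearMap
    ∘ₗ (TensorProduct.assoc k C (C ⊗[k] (C ⊗[k] C)) C).toLinearMap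
    ∘ₗ map (map LinearMap.id (map LinearMap.id (Δ k C))
        ∘ₗ map LinearMap.id (Δ k C) ∘ₗ Δ k C) LinearMap.id

/-- `Θ : x ⊗ c ↦ x γ(c₍₁₎) ⊗ c₍₂₎` -/
def ThetaGamma : P ⊗[k] C →ₗ[k] P ⊗[k] C :=
  mulPC k P C
    ∘ₗ map LinearMap.id (map γ LinearMap.id)
    ∘ₗ map LinearMap.id (Δ k C)

end Gauge

end Entwine

namespace Entwine

section Algebraic
variable {k : Type} [Field k] {P : Type} [Ring P] [Algebra k P]
  {C : Type} [AddCommGroup C] [Module k C]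
  {X : Type} [AddCommGroup X] [Module k X]

lemma mulPC_tmul (x : P) (t : P ⊗[k] C) : mulPC k P C (x ⊗ₜ t) = x • t := by
  induction t using TensorProduct.induction_on with
  | zero => simp
  | tmul y c => simp [mulPC, smul_tmul']
  | add a b ha hb => rw [tmul_add, map_add, ha, hb, smul_add]

/-- the left `P`-linear extension of `f`, as a bilinear map `(x ⊗ c, y) ↦ x f(c ⊗ y)` -/
def act (f : C ⊗[k] X →ₗ[k] P ⊗[k] C) : P ⊗[k] C →ₗ[k] X →ₗ[k] P ⊗[k] C :=
  TensorProduct.curry (mulPC k P C ∘ₗ map LinearMap.id f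
    ∘ₗ (TensorProduct.assoc k P C X).toLinearMap)

lemma act_tmul (f : C ⊗[k] X →ₗ[k] P ⊗[k] C) (x : P) (c : C) (y : X) :
    act f (x ⊗ₜ c) y = x • f (c ⊗ₜ y) := by
  simp [act, mulPC_tmul]

lemma act_smul (f : C ⊗[k] X →ₗ[k] P ⊗[k] C) (p : P) (u : P ⊗[k] C) (y : X) :
    act f (p • u) y = p • act f u y := by
  induction u using TensorProduct.induction_on with
  | zero => simp
  | tmul x c => rw [smul_tmul', act_tmul, act_tmul, smul_eq_mul, mul_smul]
  | add a b ha hb => simp only [smul_add, map_add, LinearMap.add_apply, ha, hb]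

end Algebraic

section Products
variable {k : Type} [Field k] {P : Type} [Ring P] [Algebra k P]
  {C : Type} [AddCommGroup C] [Module k C] [Coalgebra k C]
  {ψ : C ⊗[k] P →ₗ[k] P ⊗[k] C} {e : C} {ψC : C ⊗[k] C →ₗ[k] C ⊗[k] C}
  {ρ : C ⊗[k] P →ₗ[k] P} {σ : C ⊗[k] C →ₗ[k] P} {γ γi : C →ₗ[k] P}

lemma prodX_tmul (u : P ⊗[k] C) (y : P) (c : C) :
    prodX k P C ψ ψC ρ σ (u ⊗ₜ (y ⊗ₜ c)) =
      act (shat k P C ψC σ) (act (rhat k P C ψ ρ) u y) c := by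
  induction u using TensorProduct.induction_on with
  | zero => simp
  | tmul x b =>
    rw [act_tmul, act_smul]
    simp only [prodX, LinearMap.comp_apply, LinearEquiv.coe_coe, TensorProduct.assoc_tmul,
      TensorProduct.assoc_symm_tmul, map_tmul, LinearMap.id_apply, mulPC_tmul]
    rfl
  | add a b ha hb => simp only [add_tmul, map_add, LinearMap.add_apply, ha, hb]

lemma prodX_smul (p : P) (u v : P ⊗[k] C) :
    prodX k P C ψ ψC ρ σ ((p • u) ⊗ₜ v) = p • prodX k P C ψ ψC ρ σ (u ⊗ₜ v) := by
  induction v using TensorProduct.induction_on with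
  | zero => simp
  | tmul y c => rw [prodX_tmul, prodX_tmul, act_smul, act_smul]
  | add a b ha hb => simp only [tmul_add, map_add, smul_add, ha, hb]

lemma BmapIII_tmul (c : C) (x y : P) :
    BmapIII k P C ψ ρ (c ⊗ₜ (x ⊗ₜ y)) =
      act (rhat k P C ψ ρ) (rhat k P C ψ ρ (c ⊗ₜ x)) y := rfl

lemma TwRHS_tmul (a b : C) (x : P) :
    TwRHS k P C ψ ψC ρ σ (a ⊗ₜ (b ⊗ₜ x)) =
      act (rhat k P C ψ ρ) (shat k P C ψC σ (a ⊗ₜ b)) x := rfl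

lemma CocRHS_tmul (a b c : C) :
    CocRHS k P C ψC σ (a ⊗ₜ (b ⊗ₜ c)) =
      act (shat k P C ψC σ) (shat k P C ψC σ (a ⊗ₜ b)) c := rfl

lemma act_rhat_tmul_eq_prodX (a : C) (v : P ⊗[k] C) :
    (mulPC k P C
      ∘ₗ map LinearMap.id (shat k P C ψC σ)
      ∘ₗ (TensorProduct.assoc k P C C).toLinearMap
      ∘ₗ map (rhat k P C ψ ρ) LinearMap.id
      ∘ₗ (TensorProduct.assoc k C P C).symm.toLinearMap) (a ⊗ₜ v) =
    prodX k P C ψ ψC ρ σ ((1 ⊗ₜ a) ⊗ₜ v) := by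
  induction v using TensorProduct.induction_on with
  | zero => simp
  | tmul y c => rw [prodX_tmul, act_tmul, one_smul]; rfl
  | add a b ha hb => rw [tmul_add, tmul_add, map_add, map_add, ha, hb]

lemma TwLHS_tmul (a b : C) (x : P) :
    TwLHS k P C ψ ψC ρ σ (a ⊗ₜ (b ⊗ₜ x)) =
      prodX k P C ψ ψC ρ σ ((1 ⊗ₜ a) ⊗ₜ rhat k P C ψ ρ (b ⊗ₜ x)) :=
  act_rhat_tmul_eq_prodX a _

lemma CocLHS_tmul (a b c : C) :
    CocLHS k P C ψ ψC ρ σ (a ⊗ₜ (b ⊗ₜ c)) =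
      prodX k P C ψ ψC ρ σ ((1 ⊗ₜ a) ⊗ₜ shat k P C ψC σ (b ⊗ₜ c)) :=
  act_rhat_tmul_eq_prodX a _

omit [Coalgebra k C] in
lemma tmul_mem_MCsub {x : P} (hx : x ∈ Msub k P C ψ e) (c : C) :
    x ⊗ₜ[k] c ∈ MCsub k P C ψ e :=
  ⟨(⟨x, hx⟩ : Msub k P C ψ e) ⊗ₜ c, by simp⟩

omit [Coalgebra k C] in
@[elab_as_elim]
lemma MCsub_induction {p : P ⊗[k] C → Prop} {u : P ⊗[k] C} (hu : u ∈ MCsub k P C ψ e)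
    (zero : p 0) (tmul : ∀ x ∈ Msub k P C ψ e, ∀ c : C, p (x ⊗ₜ c))
    (add : ∀ a b, p a → p b → p (a + b)) : p u := by
  obtain ⟨t, rfl⟩ := hu
  induction t using TensorProduct.induction_on with
  | zero => simpa using zero
  | tmul x c => simpa using tmul x x.2 c
  | add a b ha hb => rw [map_add]; exact add _ _ ha hb

lemma one_mem_Msub (h : IsEntwining k P C ψ) : (1 : P) ∈ Msub k P C ψ e := h.2.1 e

lemma mul_mem_Msub (h : IsEntwining k P C ψ) {x y : P} (hx : x ∈ Msub k P C ψ e)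
    (hy : y ∈ Msub k P C ψ e) : x * y ∈ Msub k P C ψ e := by
  have hx' : ψ (e ⊗ₜ x) = x ⊗ₜ e := hx
  have hy' : ψ (e ⊗ₜ y) = y ⊗ₜ e := hy
  have := LinearMap.congr_fun h.1 (e ⊗ₜ (x ⊗ₜ y))
  change ψ (e ⊗ₜ (x * y)) = (x * y) ⊗ₜ e
  simpa [hx', hy'] using this

lemma smul_mem_MCsub (h : IsEntwining k P C ψ) {x : P} (hx : x ∈ Msub k P C ψ e)
    {u : P ⊗[k] C} (hu : u ∈ MCsub k P C ψ e) : x • u ∈ MCsub k P C ψ e := by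
  refine MCsub_induction hu (by simp) (fun y hy c => ?_) (fun a b ha hb => ?_)
  · rw [smul_tmul']
    exact tmul_mem_MCsub (mul_mem_Msub h hx hy) c
  · rw [smul_add]; exact add_mem ha hb

lemma act_mem_MCsub {X : Type} [AddCommGroup X] [Module k X] (h : IsEntwining k P C ψ)
    {f : C ⊗[k] X →ₗ[k] P ⊗[k] C} {y : X}
    (hf : ∀ c, f (c ⊗ₜ y) ∈ MCsub k P C ψ e) {u : P ⊗[k] C} (hu : u ∈ MCsub k P C ψ e) :
    act f u y ∈ MCsub k P C ψ e := by
  refine MCsub_induction hu (by simp) (fun x hx c => ?_) (fun a b ha hb => ?_)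
  · rw [act_tmul]; exact smul_mem_MCsub h hx (hf c)
  · rw [map_add, LinearMap.add_apply]; exact add_mem ha hb

lemma shat_mem_MCsub (hσ : SigmaIntoM k P C ψ e σ) (b c : C) :
    shat k P C ψC σ (b ⊗ₜ c) ∈ MCsub k P C ψ e := by
  have key : ∀ t : C ⊗[k] (C ⊗[k] C), map σ LinearMap.id
      ((TensorProduct.assoc k C C C).symm t) ∈ MCsub k P C ψ e := by
    intro t
    induction t using TensorProduct.induction_on with
    | zero => simp
    | add a b ha hb => rw [map_add, map_add]; exact add_mem ha hb
    | tmul a t =>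
      induction t using TensorProduct.induction_on with
      | zero => simp
      | add x y hx hy => rw [tmul_add, map_add, map_add]; exact add_mem hx hy
      | tmul x y => exact tmul_mem_MCsub (hσ a x) y
  exact key _

/-- `m` is a left `P`-linear product on `P ⊗ C` which restricts to an associative product on
`M ⊗ C` with unit `1 ⊗ e`. -/
structure IsCrossedMul (ψ : C ⊗[k] P →ₗ[k] P ⊗[k] C) (e : C)
    (m : P ⊗[k] C →ₗ[k] P ⊗[k] C →ₗ[k] P ⊗[k] C) : Prop where
  smul_left : ∀ (p : P) (u v : P ⊗[k] C), m (p • u) v = p • m u v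
  mul_mem : ∀ u ∈ MCsub k P C ψ e, ∀ v ∈ MCsub k P C ψ e, m u v ∈ MCsub k P C ψ e
  mul_assoc : ∀ u, ∀ v ∈ MCsub k P C ψ e, ∀ w ∈ MCsub k P C ψ e, m u (m v w) = m (m u v) w
  one_mul : ∀ v ∈ MCsub k P C ψ e, m (1 ⊗ₜ e) v = v
  mul_one : ∀ u, m u (1 ⊗ₜ e) = u

lemma rhat_grouplike (he : IsGrouplike k C e) (hI : CondI k P C ψ e ρ) {x : P}
    (hx : x ∈ Msub k P C ψ e) : rhat k P C ψ ρ (e ⊗ₜ x) = x ⊗ₜ e := by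
  have hx' : ψ (e ⊗ₜ x) = x ⊗ₜ e := hx
  have hΔ : Coalgebra.comul (R := k) e = e ⊗ₜ e := he.1
  simp [rhat, Δ, hΔ, hx', hI.1 x hx]

lemma rhat_one (h : AxOne k P C ψ) (hI : CondI k P C ψ e ρ) (c : C) :
    rhat k P C ψ ρ (c ⊗ₜ 1) = 1 ⊗ₜ c := by
  have key : ∀ t : C ⊗[k] C, map ρ LinearMap.id ((TensorProduct.assoc k C P C).symm
      (map LinearMap.id ψ (TensorProduct.assoc k C C P (t ⊗ₜ 1)))) =
      (1 : P) ⊗ₜ[k] TensorProduct.lid k C (Coalgebra.counit.rTensor C t) := by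
    intro t
    induction t using TensorProduct.induction_on with
    | zero => simp
    | add a b ha hb => simp only [add_tmul, map_add, ha, hb, tmul_add]
    | tmul a b => simp [h b, hI.2 a, ε, smul_tmul]
  have := key (Coalgebra.comul c)
  rw [Coalgebra.rTensor_counit_comul, TensorProduct.lid_tmul, one_smul] at this
  exact this

lemma shat_grouplike (he : IsGrouplike k C e) (hu : AxPsiCUnit k C e ψC)
    (hIV : CondIV k P C e ψC σ) (c : C) : shat k P C ψC σ (e ⊗ₜ c) = 1 ⊗ₜ c := by
  have key : ∀ t : C ⊗[k] C, map σ LinearMap.id ((TensorProduct.assoc k C C C).symm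
      (e ⊗ₜ t)) = (1 : P) ⊗ₜ[k] TensorProduct.lid k C (Coalgebra.counit.rTensor C t) := by
    intro t
    induction t using TensorProduct.induction_on with
    | zero => simp
    | add a b ha hb => simp only [tmul_add, map_add, ha, hb]
    | tmul a b => simp [hIV.1 a, ε, smul_tmul]
  have hΔ : Coalgebra.comul (R := k) e = e ⊗ₜ e := he.1
  have := key (Coalgebra.comul c)
  rw [Coalgebra.rTensor_counit_comul, TensorProduct.lid_tmul, one_smul] at this
  simpa [shat, Δ, hΔ, hu c] using this

/-- Crossed product data satisfying the cocycle and twisted module conditions make `M ⊗ C` a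
unital associative algebra. -/
lemma isCrossedMul_prodX (hdata : IsEntwiningData k P C ψ e ψC)
    (hcross : IsCrossedData k P C ψ e ψC ρ σ) (hcoc : Cocycle k P C ψ ψC ρ σ)
    (htw : Twisted k P C ψ e ψC ρ σ) :
    IsCrossedMul ψ e (TensorProduct.curry (prodX k P C ψ ψC ρ σ)) := by
  obtain ⟨hent, he, -, -, hunit⟩ := hdata
  obtain ⟨hI, hII, hIII, hσM, hIV⟩ := hcross
  set m := TensorProduct.curry (prodX k P C ψ ψC ρ σ) with hm
  set r := act (rhat k P C ψ ρ) with hr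
  set s := act (shat k P C ψC σ) with hs
  have hmt (u : P ⊗[k] C) (y : P) (c : C) : m u (y ⊗ₜ c) = s (r u y) c := prodX_tmul u y c
  have smul_left (p : P) (u v : P ⊗[k] C) : m (p • u) v = p • m u v := prodX_smul p u v
  have left_ext {f g : P ⊗[k] C →ₗ[k] P ⊗[k] C} (hf : ∀ (p : P) u, f (p • u) = p • f u)
      (hg : ∀ (p : P) u, g (p • u) = p • g u) (h : ∀ c, f (1 ⊗ₜ c) = g (1 ⊗ₜ c)) (u) :
      f u = g u := by
    induction u using TensorProduct.induction_on with
    | zero => simp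
    | tmul x c =>
      have hx : x ⊗ₜ[k] c = x • ((1 : P) ⊗ₜ[k] c) := by
        rw [smul_tmul', smul_eq_mul, _root_.mul_one]
      rw [hx, hf, hg, h]
    | add a b ha hb => rw [map_add, map_add, ha, hb]
  have r_mem {v} (hv : v ∈ MCsub k P C ψ e) {x} (hx : x ∈ Msub k P C ψ e) :
      r v x ∈ MCsub k P C ψ e := act_mem_MCsub hent (fun c => hII c x hx) hv
  have r_mul (u) {x y : P} (hx : x ∈ Msub k P C ψ e) (hy : y ∈ Msub k P C ψ e) :
      r u (x * y) = r (r u x) y :=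
    left_ext (f := r.flip (x * y)) (g := r.flip y ∘ₗ r.flip x)
      (fun p u => by simp [hr, act_smul]) (fun p u => by simp [hr, act_smul])
      (fun c => by
        simpa [hr, act_tmul, BmapIII_tmul] using hIII c x y hx hy) u
  have r_s (u) (b : C) {x : P} (hx : x ∈ Msub k P C ψ e) :
      m u (rhat k P C ψ ρ (b ⊗ₜ x)) = r (s u b) x :=
    left_ext (f := m.flip (rhat k P C ψ ρ (b ⊗ₜ x))) (g := r.flip x ∘ₗ s.flip b)
      (fun p u => by simp [smul_left]) (fun p u => by simp [hr, hs, act_smul])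
      (fun a => by
        simpa [hr, hs, hm, act_tmul, TwLHS_tmul, TwRHS_tmul] using htw a b x hx) u
  have s_s (u) (b c : C) : m u (shat k P C ψC σ (b ⊗ₜ c)) = s (s u b) c :=
    left_ext (f := m.flip (shat k P C ψC σ (b ⊗ₜ c))) (g := s.flip c ∘ₗ s.flip b)
      (fun p u => by simp [smul_left]) (fun p u => by simp [hs, act_smul])
      (fun a => by
        simpa [hs, hm, act_tmul, CocLHS_tmul, CocRHS_tmul] using
          LinearMap.congr_fun hcoc (a ⊗ₜ (b ⊗ₜ c))) u
  have m_smul (u) {y : P} (hy : y ∈ Msub k P C ψ e) {w} (hw : w ∈ MCsub k P C ψ e) :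
      m u (y • w) = m (r u y) w := by
    refine MCsub_induction hw (by simp) (fun x hx c => ?_) (fun a b ha hb => ?_)
    · rw [smul_tmul', smul_eq_mul, hmt, hmt, r_mul u hy hx]
    · rw [smul_add, map_add, map_add, ha, hb]
  have m_r (u) {v} (hv : v ∈ MCsub k P C ψ e) {x : P} (hx : x ∈ Msub k P C ψ e) :
      m u (r v x) = r (m u v) x := by
    refine MCsub_induction hv (by simp) (fun y hy c => ?_) (fun a b ha hb => ?_)
    · rw [hr, act_tmul, ← hr, m_smul u hy (hII c x hx), r_s _ _ hx, hmt]
    · simp only [map_add, LinearMap.add_apply, ha, hb]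
  have m_s (u) {v} (hv : v ∈ MCsub k P C ψ e) (c : C) : m u (s v c) = s (m u v) c := by
    refine MCsub_induction hv (by simp) (fun y hy b => ?_) (fun a b ha hb => ?_)
    · rw [hs, act_tmul, ← hs, m_smul u hy (shat_mem_MCsub hσM b c), s_s, hmt]
    · simp only [map_add, LinearMap.add_apply, ha, hb]
  refine ⟨smul_left, fun u hu v hv => ?_, fun u v hv w hw => ?_, fun v hv => ?_, fun u => ?_⟩
  · refine MCsub_induction hv (by simp) (fun y hy c => ?_) (fun a b ha hb => ?_)
    · rw [hmt]
      exact act_mem_MCsub hent (fun b => shat_mem_MCsub hσM b c) (r_mem hu hy)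
    · rw [map_add]; exact add_mem ha hb
  · refine MCsub_induction hw (by simp) (fun x hx c => ?_) (fun a b ha hb => ?_)
    · rw [hmt, m_s u (r_mem hv hx), m_r u hv hx, hmt]
    · simp only [map_add, ha, hb]
  · refine MCsub_induction hv (by simp) (fun x hx c => ?_) (fun a b ha hb => ?_)
    · rw [hmt, hr, act_tmul, one_smul, rhat_grouplike he hI hx, hs, act_tmul,
        shat_grouplike he hunit hIV, smul_tmul', smul_eq_mul, _root_.mul_one]
    · simp only [map_add, ha, hb]
  · exact left_ext (f := m.flip (1 ⊗ₜ e)) (g := LinearMap.id)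
      (fun p u => by simp [smul_left]) (fun p u => rfl)
      (fun c => by
        simp [hmt, hr, hs, act_tmul, rhat_one hent.2.1 hI, hIV.2]) u

end Products

section Recover
variable {k : Type} [Field k] {P : Type} [Ring P] [Algebra k P]
  {C : Type} [AddCommGroup C] [Module k C] [Coalgebra k C]
  {ψ : C ⊗[k] P →ₗ[k] P ⊗[k] C} {e : C} {ψC : C ⊗[k] C →ₗ[k] C ⊗[k] C}
  {ρ : C ⊗[k] P →ₗ[k] P} {σ : C ⊗[k] C →ₗ[k] P}

/-- the map `φ̂ : c ⊗ x ↦ φ(c₍₁₎ ⊗ x_α) ⊗ c₍₂₎^α` for a map `χ(c ⊗ x) = x_α ⊗ c^α`; both `rhat`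
and `shat` are of this form -/
def hat {X : Type} [AddCommGroup X] [Module k X] (χ : C ⊗[k] X →ₗ[k] X ⊗[k] C)
    (φ : C ⊗[k] X →ₗ[k] P) : C ⊗[k] X →ₗ[k] P ⊗[k] C :=
  map φ LinearMap.id
    ∘ₗ (TensorProduct.assoc k C X C).symm.toLinearMap
    ∘ₗ map LinearMap.id χ
    ∘ₗ (TensorProduct.assoc k C C X).toLinearMap
    ∘ₗ map (Δ k C) LinearMap.id

/-- the evaluation `c ↦ χ(c ⊗ x)` -/
def evalAt {X : Type} [AddCommGroup X] [Module k X] (χ : C ⊗[k] X →ₗ[k] X ⊗[k] C) (x : X) :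
    C →ₗ[k] X ⊗[k] C :=
  χ ∘ₗ (TensorProduct.mk k C X).flip x

omit [Coalgebra k C] in
lemma evalAt_apply {X : Type} [AddCommGroup X] [Module k X] (χ : C ⊗[k] X →ₗ[k] X ⊗[k] C)
    (x : X) (c : C) : evalAt χ x c = χ (c ⊗ₜ x) := rfl

omit [Coalgebra k C] in
lemma map_assoc_tmul {X : Type} [AddCommGroup X] [Module k X] (χ : C ⊗[k] X →ₗ[k] X ⊗[k] C)
    (t : C ⊗[k] C) (x : X) : map LinearMap.id χ (TensorProduct.assoc k C C X (t ⊗ₜ x)) =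
      map LinearMap.id (evalAt χ x) t := by
  induction t using TensorProduct.induction_on with
  | zero => simp
  | add a b ha hb => simp only [add_tmul, map_add, ha, hb]
  | tmul a b => simp [evalAt]

lemma hat_apply {X : Type} [AddCommGroup X] [Module k X] (χ : C ⊗[k] X →ₗ[k] X ⊗[k] C)
    (φ : C ⊗[k] X →ₗ[k] P) (c : C) (x : X) :
    hat χ φ (c ⊗ₜ x) = map φ LinearMap.id ((TensorProduct.assoc k C X C).symm
      (map LinearMap.id (evalAt χ x) (Coalgebra.comul c))) := by
  simp only [hat, LinearMap.comp_apply, map_tmul, LinearEquiv.coe_coe, LinearMap.id_apply,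
    map_assoc_tmul]

/-- the map `id ⊗ ε : P ⊗ C → P` -/
def idCounit : P ⊗[k] C →ₗ[k] P :=
  (TensorProduct.rid k P).toLinearMap ∘ₗ map LinearMap.id (ε k C)

lemma idCounit_tmul (x : P) (c : C) :
    idCounit (x ⊗ₜ[k] c) = ε k C c • x := by simp [idCounit]

lemma idCounit_hat {X : Type} [AddCommGroup X] [Module k X] {χ : C ⊗[k] X →ₗ[k] X ⊗[k] C}
    (hχ : (TensorProduct.rid k X).toLinearMap ∘ₗ map LinearMap.id (ε k C) ∘ₗ χ =
      (TensorProduct.lid k X).toLinearMap ∘ₗ map (ε k C) LinearMap.id)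
    (φ : C ⊗[k] X →ₗ[k] P) (t : C ⊗[k] X) : idCounit (hat χ φ t) = φ t := by
  have pull : ∀ (c : C) (s : X ⊗[k] C), idCounit (map φ LinearMap.id
      ((TensorProduct.assoc k C X C).symm (c ⊗ₜ s))) =
      φ (c ⊗ₜ TensorProduct.rid k X (map LinearMap.id (ε k C) s)) := by
    intro c s
    induction s using TensorProduct.induction_on with
    | zero => simp
    | add a b ha hb => simp only [tmul_add, map_add, ha, hb]
    | tmul a b => simp [idCounit]
  have key : ∀ (x : X) (t : C ⊗[k] C), idCounit (map φ LinearMap.id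
      ((TensorProduct.assoc k C X C).symm
        (map LinearMap.id (evalAt χ x) t))) =
      φ (TensorProduct.rid k C (Coalgebra.counit.lTensor C t) ⊗ₜ x) := by
    intro x t
    induction t using TensorProduct.induction_on with
    | zero => simp
    | add a b ha hb => simp only [add_tmul, map_add, ha, hb]
    | tmul a b =>
      have := LinearMap.congr_fun hχ (b ⊗ₜ x)
      simp only [LinearMap.comp_apply, LinearEquiv.coe_coe] at this
      simp [pull, evalAt_apply, this, ε, smul_tmul]
  induction t using TensorProduct.induction_on with
  | zero => simp
  | add a b ha hb => simp only [map_add, ha, hb]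
  | tmul c x =>
    rw [hat_apply, key, Coalgebra.lTensor_counit_comul, TensorProduct.rid_tmul, one_smul]

lemma idCounit_mem {u : P ⊗[k] C} (hu : u ∈ MCsub k P C ψ e) :
    idCounit u ∈ Msub k P C ψ e := by
  refine MCsub_induction hu ?_ (fun x hx c => ?_) (fun a b ha hb => ?_)
  · rw [map_zero]; exact zero_mem _
  · rw [idCounit_tmul]; exact Submodule.smul_mem _ _ hx
  · rw [map_add]; exact add_mem ha hb

/-- Crossed product data can be read off from a unital associative algebra structure on `M ⊗ C`:
it suffices that `ρ̂(c ⊗ x) = (1 ⊗ c)(x ⊗ e)` and `σ̂(b ⊗ c) = (1 ⊗ b)(1 ⊗ c)`. -/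
lemma IsCrossedMul.isCrossedData {m : P ⊗[k] C →ₗ[k] P ⊗[k] C →ₗ[k] P ⊗[k] C}
    (hm : IsCrossedMul ψ e m) (hdata : IsEntwiningData k P C ψ e ψC)
    (hr : ∀ c, ∀ x ∈ Msub k P C ψ e, rhat k P C ψ ρ (c ⊗ₜ x) = m (1 ⊗ₜ c) (x ⊗ₜ e))
    (hs : ∀ b c, shat k P C ψC σ (b ⊗ₜ c) = m (1 ⊗ₜ b) (1 ⊗ₜ c)) :
    IsCrossedData k P C ψ e ψC ρ σ ∧ Cocycle k P C ψ ψC ρ σ ∧ Twisted k P C ψ e ψC ρ σ ∧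
      ∀ u, ∀ v ∈ MCsub k P C ψ e, prodX k P C ψ ψC ρ σ (u ⊗ₜ v) = m u v := by
  obtain ⟨hent, he, -, hcu, hunit⟩ := hdata
  have h1 : (1 : P) ∈ Msub k P C ψ e := one_mem_Msub hent
  have tmul_eq (x : P) (c : C) : x ⊗ₜ[k] c = x • ((1 : P) ⊗ₜ[k] c) := by
    rw [smul_tmul', smul_eq_mul, _root_.mul_one]
  have r_eq (u) {x : P} (hx : x ∈ Msub k P C ψ e) :
      act (rhat k P C ψ ρ) u x = m u (x ⊗ₜ e) := by
    induction u using TensorProduct.induction_on with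
    | zero => simp
    | tmul y c => rw [act_tmul, hr c x hx, ← hm.smul_left, ← tmul_eq]
    | add a b ha hb => simp only [map_add, LinearMap.add_apply, ha, hb]
  have s_eq (u) (c : C) : act (shat k P C ψC σ) u c = m u (1 ⊗ₜ c) := by
    induction u using TensorProduct.induction_on with
    | zero => simp
    | tmul y b => rw [act_tmul, hs b c, ← hm.smul_left, ← tmul_eq]
    | add a b ha hb => simp only [map_add, LinearMap.add_apply, ha, hb]
  have e_mul {x : P} (y : P ⊗[k] C) (hy : y ∈ MCsub k P C ψ e) :
      m (x ⊗ₜ e) y = x • y := by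
    rw [tmul_eq, hm.smul_left, hm.one_mul _ hy]
  have prod_eq (u) {v} (hv : v ∈ MCsub k P C ψ e) :
      prodX k P C ψ ψC ρ σ (u ⊗ₜ v) = m u v := by
    refine MCsub_induction hv (by simp) (fun x hx c => ?_) (fun a b ha hb => ?_)
    · rw [prodX_tmul, r_eq _ hx, s_eq, ← hm.mul_assoc _ _ (tmul_mem_MCsub hx e) _
        (tmul_mem_MCsub h1 c), e_mul _ (tmul_mem_MCsub h1 c), ← tmul_eq]
    · simp only [tmul_add, map_add, ha, hb]
  have r_mem (c : C) {x : P} (hx : x ∈ Msub k P C ψ e) :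
      rhat k P C ψ ρ (c ⊗ₜ x) ∈ MCsub k P C ψ e := by
    rw [hr c x hx]
    exact hm.mul_mem _ (tmul_mem_MCsub h1 c) _ (tmul_mem_MCsub hx e)
  have s_mem (b c : C) : shat k P C ψC σ (b ⊗ₜ c) ∈ MCsub k P C ψ e := by
    rw [hs]
    exact hm.mul_mem _ (tmul_mem_MCsub h1 b) _ (tmul_mem_MCsub h1 c)
  have hρ (t) : ρ t = idCounit (rhat k P C ψ ρ t) := (idCounit_hat hent.2.2.2 ρ t).symm
  have hσ (t) : σ t = idCounit (shat k P C ψC σ t) := (idCounit_hat hcu σ t).symm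
  refine ⟨⟨⟨fun x hx => ?_, fun c => ?_⟩, fun c x hx => r_mem c hx, fun c x y hx hy => ?_,
    fun b c => ?_, fun c => ?_, fun c => ?_⟩, ?_, fun a b x hx => ?_, fun u v hv => prod_eq u hv⟩
  · have hεe : ε k C e = 1 := he.2
    rw [hρ, hr e x hx, hm.one_mul _ (tmul_mem_MCsub hx e), idCounit_tmul, hεe, one_smul]
  · rw [hρ, hr c 1 h1, hm.mul_one, idCounit_tmul]
  · rw [BmapIII_tmul, r_eq _ hy, hr c x hx, ← hm.mul_assoc _ _ (tmul_mem_MCsub hx e) _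
      (tmul_mem_MCsub hy e), e_mul _ (tmul_mem_MCsub hy e), smul_tmul', smul_eq_mul,
      hr c _ (mul_mem_Msub hent hx hy)]
  · rw [hσ]; exact idCounit_mem (s_mem b c)
  · rw [hσ, hs, hm.one_mul _ (tmul_mem_MCsub h1 c), idCounit_tmul]
  · rw [hs, hm.mul_one]
  · refine TensorProduct.ext' fun a t => ?_
    induction t using TensorProduct.induction_on with
    | zero => simp
    | add x y hx hy => simp only [tmul_add, map_add, hx, hy]
    | tmul b c =>
      rw [CocLHS_tmul, CocRHS_tmul, prod_eq _ (s_mem b c), s_eq, hs, hs,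
        hm.mul_assoc _ _ (tmul_mem_MCsub h1 b) _ (tmul_mem_MCsub h1 c)]
  · rw [TwLHS_tmul, TwRHS_tmul, prod_eq _ (r_mem b hx), r_eq _ hx, hr b x hx, hs,
      hm.mul_assoc _ _ (tmul_mem_MCsub h1 b) _ (tmul_mem_MCsub hx e)]

end Recover

section Theta
variable {k : Type} [Field k] {P : Type} [Ring P] [Algebra k P]
  {C : Type} [AddCommGroup C] [Module k C] [Coalgebra k C]
  {ψ : C ⊗[k] P →ₗ[k] P ⊗[k] C} {e : C} {γ γi : C →ₗ[k] P}

lemma ThetaGamma_tmul (x : P) (c : C) :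
    ThetaGamma k P C γ (x ⊗ₜ c) = x • map γ LinearMap.id (Coalgebra.comul (R := k) c) := by
  simp [ThetaGamma, mulPC_tmul, Δ]

lemma ThetaGamma_smul (p : P) (u : P ⊗[k] C) :
    ThetaGamma k P C γ (p • u) = p • ThetaGamma k P C γ u := by
  induction u using TensorProduct.induction_on with
  | zero => simp
  | tmul x c => rw [smul_tmul', ThetaGamma_tmul, ThetaGamma_tmul, smul_eq_mul, mul_smul]
  | add a b ha hb => simp only [smul_add, map_add, ha, hb]

lemma ThetaGamma_ThetaGamma
    (h : μ k P ∘ₗ map γi γ ∘ₗ Δ k C = Algebra.linearMap k P ∘ₗ ε k C) (u : P ⊗[k] C) :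
    ThetaGamma k P C γ (ThetaGamma k P C γi u) = u := by
  have step : ∀ s : C ⊗[k] C, ThetaGamma k P C γ (map γi LinearMap.id s) =
      map (μ k P ∘ₗ map γi γ) LinearMap.id
        ((TensorProduct.assoc k C C C).symm (Coalgebra.comul.lTensor C s)) := by
    intro s
    induction s using TensorProduct.induction_on with
    | zero => simp
    | add a b ha hb => simp only [map_add, ha, hb]
    | tmul a b =>
      rw [map_tmul, ThetaGamma_tmul, LinearMap.lTensor_tmul, LinearMap.id_apply]
      generalize (Coalgebra.comul b : C ⊗[k] C) = t
      induction t using TensorProduct.induction_on with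
      | zero => simp
      | add a b ha hb => simp only [tmul_add, smul_add, map_add, ha, hb]
      | tmul b c => simp [smul_tmul']
  have unit : ∀ s : C ⊗[k] C, map (Algebra.linearMap k P ∘ₗ ε k C) LinearMap.id s =
      (1 : P) ⊗ₜ[k] TensorProduct.lid k C (Coalgebra.counit.rTensor C s) := by
    intro s
    induction s using TensorProduct.induction_on with
    | zero => simp
    | add a b ha hb => simp only [map_add, ha, hb, tmul_add]
    | tmul a b => simp [Algebra.algebraMap_eq_smul_one, smul_tmul]
  induction u using TensorProduct.induction_on with
  | zero => simp
  | add a b ha hb => simp only [map_add, ha, hb]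
  | tmul x c =>
    rw [ThetaGamma_tmul, ThetaGamma_smul, step, Coalgebra.coassoc_symm_apply]
    have : ∀ s : C ⊗[k] C, map (μ k P ∘ₗ map γi γ) LinearMap.id (Coalgebra.comul.rTensor C s) =
        map (Algebra.linearMap k P ∘ₗ ε k C) (LinearMap.id : C →ₗ[k] C) s := by
      intro s
      rw [LinearMap.rTensor, ← LinearMap.comp_apply, ← map_comp, LinearMap.comp_assoc, h,
        LinearMap.comp_id]
    rw [this, unit, Coalgebra.rTensor_counit_comul, TensorProduct.lid_tmul, one_smul,
      smul_tmul', smul_eq_mul, mul_one]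

lemma ThetaGamma_mem (h : IsEntwining k P C ψ) (hγ : ∀ c, γ c ∈ Msub k P C ψ e)
    {u : P ⊗[k] C} (hu : u ∈ MCsub k P C ψ e) :
    ThetaGamma k P C γ u ∈ MCsub k P C ψ e := by
  refine MCsub_induction hu (by simp) (fun x hx c => ?_) (fun a b ha hb => ?_)
  · rw [ThetaGamma_tmul]
    refine smul_mem_MCsub h hx ?_
    generalize (Coalgebra.comul c : C ⊗[k] C) = t
    induction t using TensorProduct.induction_on with
    | zero => simp
    | add a b ha hb => rw [map_add]; exact add_mem ha hb
    | tmul a b => exact tmul_mem_MCsub (hγ a) b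
  · rw [map_add]; exact add_mem ha hb

/-- the product on `P ⊗ C` transported along `Θ`, whose inverse is `Θ'` -/
def transport (Θ Θ' : P ⊗[k] C →ₗ[k] P ⊗[k] C)
    (m : P ⊗[k] C →ₗ[k] P ⊗[k] C →ₗ[k] P ⊗[k] C) :
    P ⊗[k] C →ₗ[k] P ⊗[k] C →ₗ[k] P ⊗[k] C :=
  (m.compl₁₂ Θ Θ).compr₂ Θ'

omit [Coalgebra k C] in
lemma transport_apply (Θ Θ' : P ⊗[k] C →ₗ[k] P ⊗[k] C)
    (m : P ⊗[k] C →ₗ[k] P ⊗[k] C →ₗ[k] P ⊗[k] C) (u v : P ⊗[k] C) :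
    transport Θ Θ' m u v = Θ' (m (Θ u) (Θ v)) := rfl

lemma ThetaGamma_unit (he : IsGrouplike k C e) (hγe : γ e = 1) (x : P) :
    ThetaGamma k P C γ (x ⊗ₜ e) = x ⊗ₜ e := by
  have hΔ : Coalgebra.comul (R := k) e = e ⊗ₜ e := he.1
  rw [ThetaGamma_tmul, hΔ, map_tmul, hγe, smul_tmul', smul_eq_mul, mul_one, LinearMap.id_apply]

lemma IsCrossedMul.transport {m : P ⊗[k] C →ₗ[k] P ⊗[k] C →ₗ[k] P ⊗[k] C}
    (hm : IsCrossedMul ψ e m) (hent : IsEntwining k P C ψ) (he : IsGrouplike k C e)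
    (hγM : ∀ c : C, γ c ∈ Msub k P C ψ e) (hγiM : ∀ c : C, γi c ∈ Msub k P C ψ e)
    (hconv : (μ k P ∘ₗ map γ γi ∘ₗ Δ k C = Algebra.linearMap k P ∘ₗ ε k C) ∧
      (μ k P ∘ₗ map γi γ ∘ₗ Δ k C = Algebra.linearMap k P ∘ₗ ε k C))
    (hγe : γ e = 1) :
    IsCrossedMul ψ e (transport (ThetaGamma k P C γ) (ThetaGamma k P C γi) m) where
  smul_left p u v := by
    simp only [transport_apply, ThetaGamma_smul, hm.smul_left]
  mul_mem u hu v hv := ThetaGamma_mem hent hγiM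
    (hm.mul_mem _ (ThetaGamma_mem hent hγM hu) _ (ThetaGamma_mem hent hγM hv))
  mul_assoc u v hv w hw := by
    simp only [transport_apply, ThetaGamma_ThetaGamma hconv.2]
    rw [hm.mul_assoc _ _ (ThetaGamma_mem hent hγM hv) _ (ThetaGamma_mem hent hγM hw)]
  one_mul v hv := by
    rw [transport_apply, ThetaGamma_unit he hγe, hm.one_mul _ (ThetaGamma_mem hent hγM hv),
      ThetaGamma_ThetaGamma hconv.1]
  mul_one u := by
    rw [transport_apply, ThetaGamma_unit he hγe, hm.mul_one, ThetaGamma_ThetaGamma hconv.1]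

end Theta

section Sweedler
variable {k : Type} [Field k] {P : Type} [Ring P] [Algebra k P]
  {C : Type} [AddCommGroup C] [Module k C] [Coalgebra k C]
  {X : Type} [AddCommGroup X] [Module k X]
  {ψ : C ⊗[k] P →ₗ[k] P ⊗[k] C} {ψC : C ⊗[k] C →ₗ[k] C ⊗[k] C}
  {ρ : C ⊗[k] P →ₗ[k] P} {σ : C ⊗[k] C →ₗ[k] P} {γ γi : C →ₗ[k] P}

lemma eq_of_coassoc {V : Type} [AddCommGroup V] [Module k V]
    (F : (C ⊗[k] C) ⊗[k] C →ₗ[k] V) (G : C ⊗[k] (C ⊗[k] C) →ₗ[k] V)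
    (h : ∀ a b c, F ((a ⊗ₜ b) ⊗ₜ c) = G (a ⊗ₜ (b ⊗ₜ c))) (x : C) :
    F (map Coalgebra.comul LinearMap.id (Coalgebra.comul x)) =
      G (map LinearMap.id Coalgebra.comul (Coalgebra.comul x)) := by
  have hFG : F = G ∘ₗ (TensorProduct.assoc k C C C).toLinearMap :=
    TensorProduct.ext_threefold h
  have := Coalgebra.coassoc_apply (R := k) x
  rw [hFG]
  exact congrArg G this

/-- the axiom `(id ⊗ Δ)∘χ = χ₁₂∘χ₂₃∘(Δ ⊗ id)` -/
def ComulCompatible (χ : C ⊗[k] X →ₗ[k] X ⊗[k] C) : Prop :=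
  map LinearMap.id (Δ k C) ∘ₗ χ =
    (TensorProduct.assoc k X C C).toLinearMap
      ∘ₗ map χ LinearMap.id
      ∘ₗ (TensorProduct.assoc k C X C).symm.toLinearMap
      ∘ₗ map LinearMap.id χ
      ∘ₗ (TensorProduct.assoc k C C X).toLinearMap
      ∘ₗ map (Δ k C) LinearMap.id

/-- `χ₁₂∘χ₂₃` applied to `a ⊗ b ⊗ x`, as a map of `a ⊗ b` -/
def evalTwice (χ : C ⊗[k] X →ₗ[k] X ⊗[k] C) (x : X) : C ⊗[k] C →ₗ[k] X ⊗[k] (C ⊗[k] C) :=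
  (TensorProduct.assoc k X C C).toLinearMap ∘ₗ map χ LinearMap.id
    ∘ₗ (TensorProduct.assoc k C X C).symm.toLinearMap ∘ₗ map LinearMap.id (evalAt χ x)

lemma ComulCompatible.apply {χ : C ⊗[k] X →ₗ[k] X ⊗[k] C} (h : ComulCompatible χ) (c : C) (x : X) :
    map LinearMap.id Coalgebra.comul (χ (c ⊗ₜ x)) = evalTwice χ x (Coalgebra.comul c) := by
  have := LinearMap.congr_fun h (c ⊗ₜ x)
  simp only [LinearMap.comp_apply, map_tmul, LinearEquiv.coe_coe, LinearMap.id_apply,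
    map_assoc_tmul] at this
  exact this

lemma hat_comp_comul (χ : C ⊗[k] X →ₗ[k] X ⊗[k] C) (T : (C ⊗[k] C) ⊗[k] X →ₗ[k] P)
    (c : C) (x : X) :
    hat χ (T ∘ₗ map Coalgebra.comul LinearMap.id) (c ⊗ₜ x) =
      (map T LinearMap.id ∘ₗ (TensorProduct.assoc k (C ⊗[k] C) X C).symm.toLinearMap
        ∘ₗ map LinearMap.id (evalAt χ x))
        (map Coalgebra.comul LinearMap.id (Coalgebra.comul c)) := by
  rw [hat_apply]
  generalize (Coalgebra.comul c : C ⊗[k] C) = t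
  induction t using TensorProduct.induction_on with
  | zero => simp
  | add a b ha hb => simp only [map_add, ha, hb]
  | tmul a b =>
    simp only [LinearMap.comp_apply, map_tmul, LinearMap.id_apply, LinearEquiv.coe_coe]
    generalize evalAt χ x b = s
    induction s using TensorProduct.induction_on with
    | zero => simp
    | add a b ha hb => simp only [tmul_add, map_add, ha, hb]
    | tmul y d => simp

/-- the map `c ⊗ x ↦ γ(c₍₁₎) φ(c₍₂₎ ⊗ x)` -/
def leftConv (γ : C →ₗ[k] P) (φ : C ⊗[k] X →ₗ[k] P) : C ⊗[k] X →ₗ[k] P :=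
  (μ k P ∘ₗ map γ φ ∘ₗ (TensorProduct.assoc k C C X).toLinearMap)
    ∘ₗ map Coalgebra.comul LinearMap.id

lemma hat_leftConv (χ : C ⊗[k] X →ₗ[k] X ⊗[k] C) (φ : C ⊗[k] X →ₗ[k] P) (c : C) (x : X) :
    hat χ (leftConv γ φ) (c ⊗ₜ x) =
      act (hat χ φ) (ThetaGamma k P C γ (1 ⊗ₜ c)) x := by
  rw [leftConv, hat_comp_comul, eq_of_coassoc _
    (mulPC k P C ∘ₗ map γ (map φ LinearMap.id
      ∘ₗ (TensorProduct.assoc k C X C).symm.toLinearMap ∘ₗ map LinearMap.id (evalAt χ x))),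
    ThetaGamma_tmul, one_smul]
  · generalize (Coalgebra.comul c : C ⊗[k] C) = t
    induction t using TensorProduct.induction_on with
    | zero => simp
    | add a b ha hb => simp only [map_add, LinearMap.add_apply, ha, hb]
    | tmul a b => simp [act_tmul, hat_apply, mulPC_tmul]
  · intro a b d
    simp only [LinearMap.comp_apply, map_tmul, LinearMap.id_apply, LinearEquiv.coe_coe]
    generalize evalAt χ x d = s
    induction s using TensorProduct.induction_on with
    | zero => simp
    | add a b ha hb => simp only [tmul_add, map_add, ha, hb]
    | tmul y d => simp [mulPC_tmul, smul_tmul']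

/-- the map `c ⊗ x ↦ φ(c₍₁₎ ⊗ x_α) γ(c₍₂₎^α)` -/
def rightConv (χ : C ⊗[k] X →ₗ[k] X ⊗[k] C) (φ : C ⊗[k] X →ₗ[k] P) (γ : C →ₗ[k] P) :
    C ⊗[k] X →ₗ[k] P :=
  μ k P ∘ₗ map LinearMap.id γ ∘ₗ hat χ φ

lemma hat_rightConv {χ : C ⊗[k] X →ₗ[k] X ⊗[k] C} (hχ : ComulCompatible χ)
    (φ : C ⊗[k] X →ₗ[k] P) (c : C) (x : X) :
    hat χ (rightConv χ φ γ) (c ⊗ₜ x) = ThetaGamma k P C γ (hat χ φ (c ⊗ₜ x)) := by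
  have hT : rightConv χ φ γ = (μ k P ∘ₗ map LinearMap.id γ ∘ₗ map φ LinearMap.id
      ∘ₗ (TensorProduct.assoc k C X C).symm.toLinearMap ∘ₗ map LinearMap.id χ
      ∘ₗ (TensorProduct.assoc k C C X).toLinearMap) ∘ₗ map Coalgebra.comul LinearMap.id := rfl
  let N : C ⊗[k] (X ⊗[k] (C ⊗[k] C)) →ₗ[k] P ⊗[k] C :=
    mulPC k P C ∘ₗ map LinearMap.id (map γ LinearMap.id) ∘ₗ map φ LinearMap.id
      ∘ₗ (TensorProduct.assoc k C X (C ⊗[k] C)).symm.toLinearMap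
  have hN (a : C) (s : X ⊗[k] C) : ThetaGamma k P C γ (map φ LinearMap.id
      ((TensorProduct.assoc k C X C).symm (a ⊗ₜ s))) =
      N (a ⊗ₜ map LinearMap.id Coalgebra.comul s) := by
    induction s using TensorProduct.induction_on with
    | zero => simp
    | add a b ha hb => simp only [tmul_add, map_add, ha, hb]
    | tmul y d => simp [N, mulPC_tmul, ThetaGamma_tmul]
  rw [hT, hat_comp_comul, eq_of_coassoc _ (N ∘ₗ map LinearMap.id (evalTwice χ x)), hat_apply]
  · generalize (Coalgebra.comul c : C ⊗[k] C) = t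
    induction t using TensorProduct.induction_on with
    | zero => simp
    | add a b ha hb => simp only [map_add, ha, hb]
    | tmul a b =>
      simp only [LinearMap.comp_apply, map_tmul, LinearMap.id_apply, hN, evalAt_apply, hχ.apply]
  · intro a b d
    simp only [LinearMap.comp_apply, map_tmul, LinearMap.id_apply, LinearEquiv.coe_coe, evalTwice]
    generalize evalAt χ x d = s
    induction s using TensorProduct.induction_on with
    | zero => simp
    | add a b ha hb => simp only [tmul_add, map_add, ha, hb]
    | tmul y d =>
      simp only [LinearMap.comp_apply, map_tmul, LinearMap.id_apply, LinearEquiv.coe_coe,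
        TensorProduct.assoc_tmul, TensorProduct.assoc_symm_tmul]
      generalize χ (b ⊗ₜ y) = s
      induction s using TensorProduct.induction_on with
      | zero => simp
      | add a b ha hb => simp only [add_tmul, tmul_add, map_add, ha, hb]
      | tmul z f => simp [N, mulPC_tmul, smul_tmul']

/-- the map `b ⊗ (y ⊗ c) ↦ y_α ⊗ c_A ⊗ b^{αA}` -/
def entwinePC (ψ : C ⊗[k] P →ₗ[k] P ⊗[k] C) (ψC : C ⊗[k] C →ₗ[k] C ⊗[k] C) :
    C ⊗[k] (P ⊗[k] C) →ₗ[k] (P ⊗[k] C) ⊗[k] C :=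
  (TensorProduct.assoc k P C C).symm.toLinearMap
    ∘ₗ map LinearMap.id ψC
    ∘ₗ (TensorProduct.assoc k P C C).toLinearMap
    ∘ₗ map ψ LinearMap.id
    ∘ₗ (TensorProduct.assoc k C P C).symm.toLinearMap

/-- the map `(a ⊗ b) ⊗ (y ⊗ c) ↦ ρ(a ⊗ y_α) σ(b^α ⊗ c)` -/
def prodCoeffAux (ψ : C ⊗[k] P →ₗ[k] P ⊗[k] C) (ρ : C ⊗[k] P →ₗ[k] P)
    (σ : C ⊗[k] C →ₗ[k] P) : (C ⊗[k] C) ⊗[k] (P ⊗[k] C) →ₗ[k] P :=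
  μ k P ∘ₗ map LinearMap.id σ ∘ₗ (TensorProduct.assoc k P C C).toLinearMap
    ∘ₗ map (map ρ LinearMap.id ∘ₗ (TensorProduct.assoc k C P C).symm.toLinearMap
      ∘ₗ map LinearMap.id ψ ∘ₗ (TensorProduct.assoc k C C P).toLinearMap) LinearMap.id
    ∘ₗ (TensorProduct.assoc k (C ⊗[k] C) P C).symm.toLinearMap

/-- the map `b ⊗ (y ⊗ c) ↦ ρ(b₍₁₎ ⊗ y_α) σ(b₍₂₎^α ⊗ c)` -/
def prodCoeff (ψ : C ⊗[k] P →ₗ[k] P ⊗[k] C) (ρ : C ⊗[k] P →ₗ[k] P)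
    (σ : C ⊗[k] C →ₗ[k] P) : C ⊗[k] (P ⊗[k] C) →ₗ[k] P :=
  prodCoeffAux ψ ρ σ ∘ₗ map Coalgebra.comul LinearMap.id

omit [Coalgebra k C] in
lemma map_prodCoeffAux (a b : C) (p : P) (w : C ⊗[k] C) :
    map (prodCoeffAux ψ ρ σ) LinearMap.id
      ((TensorProduct.assoc k (C ⊗[k] C) (P ⊗[k] C) C).symm ((a ⊗ₜ[k] b) ⊗ₜ[k]
        ((TensorProduct.assoc k P C C).symm (p ⊗ₜ w)))) =
      mulPC k P C (map ρ (map σ LinearMap.id ∘ₗ (TensorProduct.assoc k C C C).symm.toLinearMap)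
        ((TensorProduct.assoc k C P (C ⊗[k] (C ⊗[k] C))).symm (a ⊗ₜ
          TensorProduct.assoc k P C (C ⊗[k] C) (ψ (b ⊗ₜ p) ⊗ₜ w)))) := by
  induction w using TensorProduct.induction_on with
  | zero => simp
  | add w z hw hz => simp only [tmul_add, map_add, hw, hz]
  | tmul c d =>
    simp only [map_tmul, LinearMap.id_apply,
      TensorProduct.assoc_tmul, TensorProduct.assoc_symm_tmul, prodCoeffAux,
      LinearMap.comp_apply, LinearEquiv.coe_coe]
    generalize ψ (b ⊗ₜ p) = s
    induction s using TensorProduct.induction_on with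
    | zero => simp
    | add a b ha hb => simp only [add_tmul, tmul_add, map_add, ha, hb]
    | tmul z f => simp [mulPC_tmul, smul_tmul']

lemma hat_prodCoeff (hψ : ComulCompatible ψ) (b : C) (v : P ⊗[k] C) :
    hat (entwinePC ψ ψC) (prodCoeff ψ ρ σ) (b ⊗ₜ v) =
      prodX k P C ψ ψC ρ σ ((1 ⊗ₜ b) ⊗ₜ v) := by
  induction v using TensorProduct.induction_on with
  | zero => simp
  | add a b ha hb => simp only [tmul_add, map_add, ha, hb]
  | tmul y c =>
  let N : C ⊗[k] (P ⊗[k] (C ⊗[k] C)) →ₗ[k] P ⊗[k] C :=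
    mulPC k P C ∘ₗ map ρ (map σ LinearMap.id ∘ₗ (TensorProduct.assoc k C C C).symm.toLinearMap
      ∘ₗ map LinearMap.id (evalAt ψC c)) ∘ₗ (TensorProduct.assoc k C P (C ⊗[k] C)).symm.toLinearMap
  have hN (a : C) (s : P ⊗[k] C) : act (shat k P C ψC σ) (map ρ LinearMap.id
      ((TensorProduct.assoc k C P C).symm (a ⊗ₜ s))) c =
      N (a ⊗ₜ map LinearMap.id Coalgebra.comul s) := by
    induction s using TensorProduct.induction_on with
    | zero => simp
    | add a b ha hb => simp only [tmul_add, map_add, LinearMap.add_apply, ha, hb]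
    | tmul y d =>
      have : shat k P C ψC σ = hat ψC σ := rfl
      simp [N, mulPC_tmul, act_tmul, this, hat_apply]
  rw [prodX_tmul, act_tmul, one_smul, prodCoeff, hat_comp_comul,
    eq_of_coassoc _ (N ∘ₗ map LinearMap.id (evalTwice ψ y)),
    show rhat k P C ψ ρ = hat ψ ρ from rfl, hat_apply]
  · generalize (Coalgebra.comul b : C ⊗[k] C) = t
    induction t using TensorProduct.induction_on with
    | zero => simp
    | add a b ha hb => simp only [map_add, LinearMap.add_apply, ha, hb]
    | tmul a b =>
      simp only [LinearMap.comp_apply, map_tmul, LinearMap.id_apply, hN, evalAt_apply, hψ.apply]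
  · intro a b d
    simp only [LinearMap.comp_apply, map_tmul, LinearMap.id_apply, LinearEquiv.coe_coe, evalTwice,
      evalAt_apply, entwinePC, TensorProduct.assoc_symm_tmul]
    generalize ψ (d ⊗ₜ y) = s
    induction s using TensorProduct.induction_on with
    | zero => simp
    | add a b ha hb => simp only [tmul_add, add_tmul, map_add, ha, hb]
    | tmul p d =>
      simp only [map_tmul, LinearMap.id_apply,
        TensorProduct.assoc_tmul, TensorProduct.assoc_symm_tmul, N,
        LinearMap.comp_apply, LinearEquiv.coe_coe]
      refine (map_prodCoeffAux a b p _).trans ?_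
      generalize ψ (b ⊗ₜ p) = s
      induction s using TensorProduct.induction_on with
      | zero => simp
      | add a b ha hb => simp only [add_tmul, tmul_add, map_add, ha, hb]
      | tmul z f => simp [mulPC_tmul, evalAt_apply]

lemma hat_comp_of_intertwine {Y : Type} [AddCommGroup Y] [Module k Y]
    {χ : C ⊗[k] X →ₗ[k] X ⊗[k] C} {η : C ⊗[k] Y →ₗ[k] Y ⊗[k] C} (j : Y →ₗ[k] X)
    (hj : ∀ t, χ (map LinearMap.id j t) = map j LinearMap.id (η t))
    (φ : C ⊗[k] X →ₗ[k] P) (c : C) (y : Y) :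
    hat η (φ ∘ₗ map LinearMap.id j) (c ⊗ₜ y) = hat χ φ (c ⊗ₜ j y) := by
  rw [hat_apply, hat_apply]
  generalize (Coalgebra.comul c : C ⊗[k] C) = t
  induction t using TensorProduct.induction_on with
  | zero => simp
  | add a b ha hb => simp only [map_add, ha, hb]
  | tmul a b =>
    have := hj (b ⊗ₜ y)
    rw [map_tmul, LinearMap.id_apply] at this
    simp only [map_tmul, LinearMap.id_apply, evalAt_apply, this]
    generalize η (b ⊗ₜ y) = s
    induction s using TensorProduct.induction_on with
    | zero => simp
    | add a b ha hb => simp only [tmul_add, map_add, ha, hb]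
    | tmul z f => simp

lemma rhoGamma_eq : rhoGamma k P C ψ ρ γ γi = rightConv ψ (leftConv γ ρ) γi := by
  refine TensorProduct.ext' fun c x => ?_
  simp only [rightConv, LinearMap.comp_apply, hat_leftConv, ThetaGamma_tmul, one_smul, rhoGamma,
    map_tmul, LinearMap.id_apply, LinearEquiv.coe_coe, Δ]
  generalize (Coalgebra.comul c : C ⊗[k] C) = t
  induction t using TensorProduct.induction_on with
  | zero => simp
  | add a b ha hb => simp only [add_tmul, map_add, LinearMap.add_apply, ha, hb]
  | tmul a b =>
    simp only [map_tmul, LinearMap.id_apply, TensorProduct.assoc_tmul, act_tmul, hat,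
      LinearMap.comp_apply, LinearEquiv.coe_coe, Δ]
    generalize (TensorProduct.assoc k C P C).symm _ = s
    induction s using TensorProduct.induction_on with
    | zero => simp
    | add a b ha hb => simp only [tmul_add, smul_add, map_add, ha, hb]
    | tmul z f => simp [smul_tmul', mul_assoc]

/-- the map `c ↦ γ(c₍₁₎) ⊗ c₍₂₎` -/
def gammaCoact (γ : C →ₗ[k] P) : C →ₗ[k] P ⊗[k] C := map γ LinearMap.id ∘ₗ Coalgebra.comul

lemma entwinePC_gammaCoact (hcov : Cov216 k P C ψ ψC γ) (t : C ⊗[k] C) :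
    entwinePC ψ ψC (map LinearMap.id (gammaCoact γ) t) =
      map (gammaCoact γ) LinearMap.id (ψC t) := by
  have h := LinearMap.congr_fun hcov t
  simp only [LinearMap.comp_apply, LinearEquiv.coe_coe] at h
  have h1 : map LinearMap.id (gammaCoact γ) t = map LinearMap.id (map γ LinearMap.id)
      (map (LinearMap.id : C →ₗ[k] C) (Δ k C) t) := by
    rw [← LinearMap.comp_apply, ← map_comp]; rfl
  simp only [entwinePC, LinearMap.comp_apply, LinearEquiv.coe_coe]
  rw [h1, h, LinearEquiv.symm_apply_eq]
  generalize ψC t = s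
  induction s using TensorProduct.induction_on with
  | zero => simp
  | add a b ha hb => simp only [map_add, ha, hb]
  | tmul a b =>
    simp only [map_tmul, gammaCoact, LinearMap.comp_apply, LinearMap.id_apply, Δ]
    generalize (Coalgebra.comul a : C ⊗[k] C) = r
    induction r using TensorProduct.induction_on with
    | zero => simp
    | add a b ha hb => simp only [add_tmul, map_add, ha, hb]
    | tmul a b => simp

/-- the map `b ⊗ (d ⊗ w) ↦ ρ(b ⊗ γ(w'₍₁₎)_α) σ(d^α ⊗ w'₍₂₎) γ⁻¹(w'')` for `w = w' ⊗ w''` -/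
def sigmaTail (ψ : C ⊗[k] P →ₗ[k] P ⊗[k] C) (ρ : C ⊗[k] P →ₗ[k] P) (σ : C ⊗[k] C →ₗ[k] P)
    (γ γi : C →ₗ[k] P) : C ⊗[k] (C ⊗[k] (C ⊗[k] C)) →ₗ[k] P :=
  μ k P
    ∘ₗ map ρ (μ k P)
    ∘ₗ (TensorProduct.assoc k C P (P ⊗[k] P)).symm.toLinearMap
    ∘ₗ map LinearMap.id (map LinearMap.id (map σ γi)
      ∘ₗ map LinearMap.id (TensorProduct.assoc k C C C).symm.toLinearMap
      ∘ₗ (TensorProduct.assoc k P C (C ⊗[k] C)).toLinearMap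
      ∘ₗ map ψ LinearMap.id
      ∘ₗ (TensorProduct.assoc k C P (C ⊗[k] C)).symm.toLinearMap
      ∘ₗ map LinearMap.id (map γ LinearMap.id)
      ∘ₗ map LinearMap.id (TensorProduct.assoc k C C C).toLinearMap
      ∘ₗ map LinearMap.id (map (Δ k C) LinearMap.id))

lemma sigmaTail_tmul (a b c d : C) : sigmaTail ψ ρ σ γ γi (a ⊗ₜ (b ⊗ₜ (c ⊗ₜ d))) =
    prodCoeffAux ψ ρ σ ((a ⊗ₜ b) ⊗ₜ gammaCoact γ c) * γi d := by
  simp only [sigmaTail, gammaCoact, LinearMap.comp_apply, map_tmul, LinearMap.id_apply,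
    LinearEquiv.coe_coe, Δ]
  generalize (Coalgebra.comul c : C ⊗[k] C) = t
  induction t using TensorProduct.induction_on with
  | zero => simp
  | add a b ha hb => simp only [add_tmul, tmul_add, map_add, ha, hb, add_mul]
  | tmul p q =>
    simp only [prodCoeffAux, LinearMap.comp_apply, map_tmul, LinearMap.id_apply,
      LinearEquiv.coe_coe, TensorProduct.assoc_tmul, TensorProduct.assoc_symm_tmul]
    generalize ψ (b ⊗ₜ γ p) = s
    induction s using TensorProduct.induction_on with
    | zero => simp
    | add a b ha hb => simp only [add_tmul, tmul_add, map_add, ha, hb, add_mul]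
    | tmul z f => simp [mul_assoc]

lemma rightConv_prodCoeff (b c : C) :
    rightConv ψC (prodCoeff ψ ρ σ ∘ₗ map LinearMap.id (gammaCoact γ)) γi (b ⊗ₜ c) =
      (sigmaTail ψ ρ σ γ γi ∘ₗ map LinearMap.id (map LinearMap.id ψC
        ∘ₗ (TensorProduct.assoc k C C C).toLinearMap ∘ₗ (TensorProduct.mk k (C ⊗[k] C) C).flip c))
        (map LinearMap.id Coalgebra.comul (Coalgebra.comul b)) := by
  have hT : prodCoeff ψ ρ σ ∘ₗ map LinearMap.id (gammaCoact γ) =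
      (prodCoeffAux ψ ρ σ ∘ₗ map LinearMap.id (gammaCoact γ)) ∘ₗ
        map Coalgebra.comul LinearMap.id := TensorProduct.ext' fun _ _ => rfl
  rw [rightConv, hT, LinearMap.comp_apply, LinearMap.comp_apply, hat_comp_comul,
    ← LinearMap.comp_apply, ← LinearMap.comp_apply]
  refine eq_of_coassoc _ _ (fun p q r => ?_) b
  simp only [LinearMap.comp_apply, map_tmul, LinearMap.id_apply, LinearEquiv.coe_coe,
    evalAt_apply, LinearMap.flip_apply, TensorProduct.mk_apply, TensorProduct.assoc_tmul]
  generalize ψC (r ⊗ₜ c) = s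
  induction s using TensorProduct.induction_on with
  | zero => simp
  | add a b ha hb => simp only [tmul_add, map_add, ha, hb]
  | tmul z f => simp [sigmaTail_tmul]

lemma sigmaGamma_eq (b c : C) : sigmaGamma k P C ψ ψC ρ σ γ γi (b ⊗ₜ c) =
    rightConv ψC (leftConv γ (prodCoeff ψ ρ σ ∘ₗ map LinearMap.id (gammaCoact γ))) γi
      (b ⊗ₜ c) := by
  have h (u : P ⊗[k] C) : (μ k P) (map LinearMap.id γi (act (hat ψC
      (prodCoeff ψ ρ σ ∘ₗ map LinearMap.id (gammaCoact γ))) u c)) =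
      μ k P (map LinearMap.id (rightConv ψC
        (prodCoeff ψ ρ σ ∘ₗ map LinearMap.id (gammaCoact γ)) γi ∘ₗ
          (TensorProduct.mk k C C).flip c) u) := by
    induction u using TensorProduct.induction_on with
    | zero => simp
    | add a b ha hb => simp only [map_add, LinearMap.add_apply, ha, hb]
    | tmul x a =>
      simp only [act_tmul, map_tmul, LinearMap.comp_apply, rightConv, LinearMap.flip_apply,
        TensorProduct.mk_apply, LinearMap.id_apply, LinearMap.mul'_apply]
      generalize hat ψC (prodCoeff ψ ρ σ ∘ₗ map LinearMap.id (gammaCoact γ)) (a ⊗ₜ c) = s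
      induction s using TensorProduct.induction_on with
      | zero => simp
      | add a b ha hb => simp only [smul_add, mul_add, map_add, ha, hb]
      | tmul z f => simp [smul_tmul', mul_assoc]
  rw [rightConv, LinearMap.comp_apply, LinearMap.comp_apply, hat_leftConv, h, ThetaGamma_tmul,
    one_smul]
  simp only [sigmaGamma, LinearMap.comp_apply, map_tmul, LinearMap.id_apply, LinearEquiv.coe_coe,
    Δ]
  generalize (Coalgebra.comul b : C ⊗[k] C) = t
  induction t using TensorProduct.induction_on with
  | zero => simp
  | add a b ha hb => simp only [add_tmul, map_add, ha, hb]
  | tmul a b =>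
    simp only [map_tmul, LinearMap.id_apply, TensorProduct.assoc_tmul, LinearMap.comp_apply,
      LinearMap.flip_apply, TensorProduct.mk_apply, rightConv_prodCoeff, LinearMap.mul'_apply]
    generalize (map LinearMap.id Coalgebra.comul (Coalgebra.comul b) : C ⊗[k] (C ⊗[k] C)) = r
    induction r using TensorProduct.induction_on with
    | zero => simp
    | add a b ha hb => simp only [add_tmul, map_add, mul_add, ha, hb]
    | tmul p r => simp [sigmaTail]

lemma rhat_rhoGamma (hψ : ComulCompatible ψ) (c : C) (x : P) :
    rhat k P C ψ (rhoGamma k P C ψ ρ γ γi) (c ⊗ₜ x) =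
      ThetaGamma k P C γi (act (rhat k P C ψ ρ) (ThetaGamma k P C γ (1 ⊗ₜ c)) x) := by
  rw [rhoGamma_eq]
  exact (hat_rightConv hψ _ c x).trans (congrArg _ (hat_leftConv ψ ρ c x))

lemma shat_sigmaGamma (hψ : ComulCompatible ψ) (hψC : ComulCompatible ψC)
    (hcov : Cov216 k P C ψ ψC γ) (b c : C) :
    shat k P C ψC (sigmaGamma k P C ψ ψC ρ σ γ γi) (b ⊗ₜ c) =
      ThetaGamma k P C γi (prodX k P C ψ ψC ρ σ
        (ThetaGamma k P C γ (1 ⊗ₜ b) ⊗ₜ ThetaGamma k P C γ (1 ⊗ₜ c))) := by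
  rw [show sigmaGamma k P C ψ ψC ρ σ γ γi = _ from TensorProduct.ext' sigmaGamma_eq]
  refine (hat_rightConv hψC _ b c).trans (congrArg _ ?_)
  rw [hat_leftConv]
  generalize ThetaGamma k P C γ (1 ⊗ₜ b) = u
  induction u using TensorProduct.induction_on with
  | zero => simp
  | add a b ha hb => simp only [add_tmul, map_add, LinearMap.add_apply, ha, hb]
  | tmul x a =>
    rw [act_tmul, hat_comp_of_intertwine _ (entwinePC_gammaCoact hcov), hat_prodCoeff hψ,
      ← prodX_smul, smul_tmul', smul_eq_mul, mul_one, ThetaGamma_tmul, one_smul]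
    rfl

end Sweedler

end Entwine

namespace Entwine

/-- (Proposition 3.1) A gauge transformation `γ` transforms crossed
product data `(ρ, σ)` into crossed product data `(ρ^γ, σ^γ)`, and
`Θ(x ⊗ c) = xγ(c₍₁₎) ⊗ c₍₂₎` is an algebra isomorphism
`M ×_{ρ^γ,σ^γ} C ≅ M ×_{ρ,σ} C`. -/
theorem gauge_transform
    (k : Type) [Field k] (P : Type) [Ring P] [Algebra k P]
    (C : Type) [AddCommGroup C] [Module k C] [Coalgebra k C]
    (ψ : C ⊗[k] P →ₗ[k] P ⊗[k] C) (e : C) (ψC : C ⊗[k] C →ₗ[k] C ⊗[k] C)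
    (ρ : C ⊗[k] P →ₗ[k] P) (σ : C ⊗[k] C →ₗ[k] P) (γ γi : C →ₗ[k] P)
    (hdata : IsEntwiningData k P C ψ e ψC)
    (hcross : IsCrossedData k P C ψ e ψC ρ σ)
    (hcoc : Cocycle k P C ψ ψC ρ σ)
    (htw : Twisted k P C ψ e ψC ρ σ)
    (hγM : ∀ c : C, γ c ∈ Msub k P C ψ e)
    (hγiM : ∀ c : C, γi c ∈ Msub k P C ψ e)
    (hconv : (μ k P ∘ₗ map γ γi ∘ₗ Δ k C = Algebra.linearMap k P ∘ₗ ε k C) ∧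
      (μ k P ∘ₗ map γi γ ∘ₗ Δ k C = Algebra.linearMap k P ∘ₗ ε k C))
    (hγe : γ e = 1)
    (hcov : Cov216 k P C ψ ψC γ) :
    IsCrossedData k P C ψ e ψC (rhoGamma k P C ψ ρ γ γi)
        (sigmaGamma k P C ψ ψC ρ σ γ γi) ∧
    Cocycle k P C ψ ψC (rhoGamma k P C ψ ρ γ γi)
        (sigmaGamma k P C ψ ψC ρ σ γ γi) ∧
    Twisted k P C ψ e ψC (rhoGamma k P C ψ ρ γ γi)
        (sigmaGamma k P C ψ ψC ρ σ γ γi) ∧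
    Set.MapsTo (ThetaGamma k P C γ) (MCsub k P C ψ e) (MCsub k P C ψ e) ∧
    Function.Bijective (ThetaGamma k P C γ) ∧
    ThetaGamma k P C γ ((1 : P) ⊗ₜ e) = (1 : P) ⊗ₜ[k] e ∧
    (∀ u ∈ MCsub k P C ψ e, ∀ v ∈ MCsub k P C ψ e,
      ThetaGamma k P C γ
          (prodX k P C ψ ψC (rhoGamma k P C ψ ρ γ γi)
            (sigmaGamma k P C ψ ψC ρ σ γ γi) (u ⊗ₜ v)) =
        prodX k P C ψ ψC ρ σ (ThetaGamma k P C γ u ⊗ₜ ThetaGamma k P C γ v)) := by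
  have hψ : ComulCompatible ψ := hdata.1.2.2.1
  have hψC : ComulCompatible ψC := hdata.2.2.1
  have hent := hdata.1
  have he := hdata.2.1
  have hm := (isCrossedMul_prodX hdata hcross hcoc htw).transport hent he hγM hγiM hconv hγe
  have hΘ := ThetaGamma_ThetaGamma hconv.2
  have hs_unit (u : P ⊗[k] C) : act (shat k P C ψC σ) u e = u := by
    induction u using TensorProduct.induction_on with
    | zero => simp
    | add a b ha hb => rw [map_add, LinearMap.add_apply, ha, hb]
    | tmul x c => rw [act_tmul, hcross.2.2.2.2.2, smul_tmul', smul_eq_mul, mul_one]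
  obtain ⟨h1, h2, h3, h4⟩ := hm.isCrossedData (ψC := ψC) (ρ := rhoGamma k P C ψ ρ γ γi)
    (σ := sigmaGamma k P C ψ ψC ρ σ γ γi) hdata
    (fun c x _ => by
      rw [rhat_rhoGamma hψ, transport_apply, ThetaGamma_unit he hγe, TensorProduct.curry_apply,
        prodX_tmul, hs_unit])
    (shat_sigmaGamma hψ hψC hcov)
  refine ⟨h1, h2, h3, fun u hu => ThetaGamma_mem hent hγM hu,
    Function.bijective_iff_has_inverse.2 ⟨_, ThetaGamma_ThetaGamma hconv.1, hΘ⟩,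
    ThetaGamma_unit he hγe 1, fun u _ v hv => ?_⟩
  rw [h4 u v hv, transport_apply, hΘ, TensorProduct.curry_apply]

end Entwine
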